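/- Let X ⊆ ℝⁿ be nonempty and closed, and c : ℝⁿ → ℝᵖ continuously differentiable. Fix x ∈ X with c(x) ≠ 0, set g := ∇c(x)c(x), and let L > 0 be such that ‖∇c(y)c(y) − ∇c(z)c(z)‖ ≤ L‖y − z‖ for all y, z ∈ B̄(x;1). Then for every η with 0 < η ≤ min{1/(2‖g‖), 1/(2L)} and every y₊ ∈ X with ‖(x − ηg) − y₊‖ = dist(x − ηg, X), one has ½‖c(y₊)‖² ≤ ½‖c(x)‖² − (1/(4η))‖y₊ − x‖². -/

import Mathlib

open Metric

/-!
Write `g = (J x)ᵀ (c x)`, `d = yplus - x` and `f = ½‖c‖²`, so that `∇f(y) = (J y)ᵀ (c y)`.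
Comparing `yplus` with the competitor `x ∈ X` in the projection problem gives
`‖d + η g‖ ≤ ‖η g‖`. Hence `‖d‖ ≤ 2η‖g‖ ≤ 1`, so the segment `[x, yplus]` stays in the unit
ball where `∇f` is `L`-Lipschitz; squaring instead gives `⟪g, d⟫ ≤ -‖d‖² / (2η)`.
The descent inequality `f (x + d) ≤ f x + ⟪g, d⟫ + (L/2)‖d‖²` (lemma `descent_half_norm_sq`)
and `L ≤ 1 / (2η)` then give the claim.
-/

/-- Descent lemma for `½‖c‖²`. It holds because
`t ↦ ½‖c (x + t d)‖² - t ⟪∇f(x), d⟫ - (L/2) t² ‖d‖²`, with `f = ½‖c‖²`, has nonpositive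
derivative on `[0, 1]`. -/
lemma descent_half_norm_sq {E F : Type*} [NormedAddCommGroup E] [InnerProductSpace ℝ E]
    [CompleteSpace E] [NormedAddCommGroup F] [InnerProductSpace ℝ F] [CompleteSpace F]
    (c : E → F) (J : E → (E →L[ℝ] F)) (hderiv : ∀ y, HasFDerivAt c (J y) y)
    (x d : E) (L : ℝ) (hd : ‖d‖ ≤ 1)
    (hLip : ∀ y ∈ closedBall x 1, ∀ z ∈ closedBall x 1,
      ‖(ContinuousLinearMap.adjoint (J y)) (c y) -
        (ContinuousLinearMap.adjoint (J z)) (c z)‖ ≤ L * ‖y - z‖) :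
    (1 / 2) * ‖c (x + d)‖ ^ 2 ≤ (1 / 2) * ‖c x‖ ^ 2 +
      inner ℝ ((ContinuousLinearMap.adjoint (J x)) (c x)) d + L / 2 * ‖d‖ ^ 2 := by
  set G : E → E := fun y => (ContinuousLinearMap.adjoint (J y)) (c y) with hG
  let φ : ℝ → ℝ := fun t => (1 / 2) * ‖c (x + t • d)‖ ^ 2 - t * inner ℝ (G x) d
    - L / 2 * ‖d‖ ^ 2 * t ^ 2
  have hφ : ∀ t : ℝ, HasDerivAt φ
      (inner ℝ (G (x + t • d) - G x) d - L * ‖d‖ ^ 2 * t) t := by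
    intro t
    have hl : HasDerivAt (fun t : ℝ => x + t • d) d t := by
      simpa using ((hasDerivAt_id t).smul_const d).const_add x
    have hc : HasDerivAt (fun t : ℝ => c (x + t • d)) (J (x + t • d) d) t :=
      (hderiv (x + t • d)).comp_hasDerivAt t hl
    have h := ((hc.norm_sq.const_mul (1 / 2)).sub
      ((hasDerivAt_id t).mul_const (inner ℝ (G x) d))).sub
      ((hasDerivAt_pow 2 t).const_mul (L / 2 * ‖d‖ ^ 2))
    refine HasDerivAt.congr_deriv (f := φ) h ?_
    rw [inner_sub_left, hG]
    simp only [ContinuousLinearMap.adjoint_inner_left]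
    push_cast
    ring
  have hanti : AntitoneOn φ (Set.Icc 0 1) := by
    refine antitoneOn_of_deriv_nonpos (convex_Icc 0 1)
      (fun t _ => (hφ t).continuousAt.continuousWithinAt)
      (fun t _ => (hφ t).differentiableAt.differentiableWithinAt) ?_
    intro t ht
    rw [interior_Icc] at ht
    rw [(hφ t).deriv]
    have hnorm : ‖t • d‖ = t * ‖d‖ := by
      rw [norm_smul, Real.norm_of_nonneg ht.1.le]
    have hmem : x + t • d ∈ closedBall x 1 := by
      rw [mem_closedBall_iff_norm, add_sub_cancel_left, hnorm]
      nlinarith [norm_nonneg d, ht.1, ht.2]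
    have h1 := hLip _ hmem x (mem_closedBall_self zero_le_one)
    rw [add_sub_cancel_left, hnorm] at h1
    have h2 := real_inner_le_norm (G (x + t • d) - G x) d
    have h3 := mul_le_mul_of_nonneg_right h1 (norm_nonneg d)
    have h4 : inner ℝ (G (x + t • d) - G x) d ≤ L * (t * ‖d‖) * ‖d‖ := h2.trans h3
    linarith [h4, show L * (t * ‖d‖) * ‖d‖ = L * ‖d‖ ^ 2 * t by ring]
  have h := hanti (Set.left_mem_Icc.2 zero_le_one) (Set.right_mem_Icc.2 zero_le_one) zero_le_one
  simp only [φ, one_smul, zero_smul, add_zero] at h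
  change _ ≤ _ + inner ℝ (G x) d + _
  linarith

/-- (Paper's Lemma 3.10.) Sufficient decrease of the projected
gradient step: for `g = ∇c(x)c(x)` (with `J y` the Jacobian of `c` at `y`, so that
`∇c(y)c(y) = (J y)ᵀ (c y)`), any stepsize `0 < η ≤ min{1/(2‖g‖), 1/(2L)}`, and any
nearest point `yplus` of `X` to `x - ηg`, one has
`½‖c(yplus)‖² ≤ ½‖c(x)‖² - (1/(4η))‖yplus - x‖²`. -/
theorem stmt10 {n p : ℕ}
    (X : Set (EuclideanSpace ℝ (Fin n))) (hXne : X.Nonempty) (hXcl : IsClosed X)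
    (c : EuclideanSpace ℝ (Fin n) → EuclideanSpace ℝ (Fin p))
    (J : EuclideanSpace ℝ (Fin n) → (EuclideanSpace ℝ (Fin n) →L[ℝ] EuclideanSpace ℝ (Fin p)))
    (hderiv : ∀ y, HasFDerivAt c (J y) y) (hJcont : Continuous J)
    (x : EuclideanSpace ℝ (Fin n)) (hxX : x ∈ X) (hcx : c x ≠ 0)
    (L : ℝ) (hL : 0 < L)
    (hLip : ∀ y ∈ closedBall x 1, ∀ z ∈ closedBall x 1,
      ‖(ContinuousLinearMap.adjoint (J y)) (c y) -
        (ContinuousLinearMap.adjoint (J z)) (c z)‖ ≤ L * ‖y - z‖)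
    (η : ℝ) (hη0 : 0 < η)
    (hη : η ≤ min (1 / (2 * ‖(ContinuousLinearMap.adjoint (J x)) (c x)‖)) (1 / (2 * L)))
    (yplus : EuclideanSpace ℝ (Fin n)) (hyplus : yplus ∈ X)
    (hproj : ‖(x - η • (ContinuousLinearMap.adjoint (J x)) (c x)) - yplus‖ =
      infDist (x - η • (ContinuousLinearMap.adjoint (J x)) (c x)) X) :
    (1 / 2) * ‖c yplus‖ ^ 2 ≤ (1 / 2) * ‖c x‖ ^ 2 - (1 / (4 * η)) * ‖yplus - x‖ ^ 2 := by
  set g := (ContinuousLinearMap.adjoint (J x)) (c x) with hg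
  set d := yplus - x with hd
  have hcomp : ‖d + η • g‖ ≤ ‖η • g‖ := by
    have h := infDist_le_dist_of_mem (x := x - η • g) hxX
    rw [← hproj, dist_eq_norm, norm_sub_rev] at h
    calc ‖d + η • g‖ = ‖yplus - (x - η • g)‖ := by congr 1; rw [hd]; abel
      _ ≤ ‖x - η • g - x‖ := h
      _ = ‖η • g‖ := by rw [sub_sub_cancel_left, norm_neg]
  have hηg : ‖η • g‖ = η * ‖g‖ := by rw [norm_smul, Real.norm_of_nonneg hη0.le]
  have hstep : 2 * (η * ‖g‖) ≤ 1 := by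
    rcases (norm_nonneg g).eq_or_lt with h0 | hpos
    · rw [← h0]; norm_num
    · have h := hη.trans (min_le_left _ _)
      rw [le_div_iff₀ (by positivity)] at h
      linarith
  have hLη : η * (2 * L) ≤ 1 :=
    (le_div_iff₀ (by positivity)).1 (hη.trans (min_le_right _ _))
  have hd1 : ‖d‖ ≤ 1 := by
    have h : ‖d‖ ≤ ‖d + η • g‖ + ‖η • g‖ := by
      simpa using norm_sub_le (d + η • g) (η • g)
    linarith
  have hinner : ‖d‖ ^ 2 + 2 * (η * inner ℝ g d) ≤ 0 := by
    have h := pow_le_pow_left₀ (norm_nonneg _) hcomp 2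
    rw [norm_add_sq_real, real_inner_smul_right, real_inner_comm] at h
    linarith
  have hdesc := descent_half_norm_sq c J hderiv x d L hd1 hLip
  rw [← hg, show x + d = yplus by rw [hd]; abel] at hdesc
  have hkey : inner ℝ g d + L / 2 * ‖d‖ ^ 2 ≤ -(1 / (4 * η) * ‖d‖ ^ 2) := by
    have h : 1 / (4 * η) * ‖d‖ ^ 2 = ‖d‖ ^ 2 / (4 * η) := by ring
    rw [h, le_neg, div_le_iff₀ (by positivity)]
    nlinarith [mul_le_mul_of_nonneg_right hLη (sq_nonneg ‖d‖)]
  linarith
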